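/- Let (X₁,X₂,X₃) be a centered Gaussian random vector in ℝ³ with correlation coefficients ρ_{12}, ρ_{13} and nondegenerate components. Then for every α₁ ∈ (0,1) and α₂,α₃ ∈ (0,∞), E[|X₁|^{-α₁}|X₂|^{α₂}|X₃|^{α₃}] ≥ (1-ρ_{12}²)^{α₂/2}(1-ρ_{13}²)^{α₃/2} · E[|X₁|^{-α₁}] E[|X₂|^{α₂}] E[|X₃|^{α₃}]. -/

import Mathlib

open MeasureTheory Matrix
open ProbabilityTheory
open scoped NNReal ENNReal

namespace GPI

lemma ms (β : ℝ) : Measurable (fun x : ℝ => |x| ^ β) := by fun_prop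

lemma hgl_int {Ω : Type*} [MeasurableSpace Ω] {P : Measure Ω} {Y : Ω → ℝ}
    (h : HasGaussianLaw Y P) {β : ℝ} (hβ : 0 < β) : Integrable (fun ω => |Y ω| ^ β) P := by
  have := (h.memLp (p := ENNReal.ofReal β) (by simp)).integrable_norm_rpow
    (by simpa using hβ) (by simp)
  simpa [ENNReal.toReal_ofReal hβ.le] using this

lemma gint (m : ℝ) (v : ℝ≥0) {β : ℝ} (hβ : 0 < β) :
    Integrable (fun x => |x| ^ β) (gaussianReal m v) :=
  hgl_int (Y := id) (IsGaussian.hasGaussianLaw_id) hβ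

lemma hgl_int2 {Ω : Type*} [MeasurableSpace Ω] {P : Measure Ω} {Y Z : Ω → ℝ}
    (h : HasGaussianLaw Y P) (h' : HasGaussianLaw Z P) {β γ : ℝ} (hβ : 0 < β) (hγ : 0 < γ) :
    Integrable (fun ω => |Y ω| ^ β * |Z ω| ^ γ) P := by
  have hY := hgl_int h hβ
  have hZ := hgl_int h' hγ
  have hY2 := hgl_int h (β := β * 2) (by positivity)
  have hZ2 := hgl_int h' (β := γ * 2) (by positivity)
  refine (hY2.add hZ2).mono' (hY.1.mul hZ.1) (ae_of_all _ fun ω => ?_)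
  rw [Real.norm_of_nonneg (by positivity)]
  simp only [Pi.add_apply]
  rw [Real.rpow_mul (abs_nonneg _), Real.rpow_mul (abs_nonneg _), Real.rpow_two, Real.rpow_two]
  nlinarith [sq_nonneg (|Y ω| ^ β - |Z ω| ^ γ), sq_nonneg (|Y ω| ^ β), sq_nonneg (|Z ω| ^ γ)]

/-- Reflection argument. -/
lemma mono_aux {a b : ℝ} (ha : 0 ≤ a) (hab : a ≤ b) (v : ℝ≥0) {β : ℝ} (hβ : 0 < β) :
    ∫ x, |x| ^ β ∂(gaussianReal a v) ≤ ∫ x, |x| ^ β ∂(gaussianReal b v) := by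
  by_cases hv : v = 0
  · subst hv
    simp only [gaussianReal_zero_var, integral_dirac]
    rw [abs_of_nonneg ha, abs_of_nonneg (ha.trans hab)]
    exact Real.rpow_le_rpow ha hab hβ.le
  have key : ∀ m : ℝ, Integrable (fun x => gaussianPDFReal m v x * |x| ^ β) := by
    intro m
    have := gint m v hβ
    rw [gaussianReal_of_var_ne_zero _ hv,
      integrable_withDensity_iff_integrable_smul' (measurable_gaussianPDF _ _)
      (ae_of_all _ fun _ ↦ gaussianPDF_lt_top)] at this
    simpa [toReal_gaussianPDF] using this
  rw [integral_gaussianReal_eq_integral_smul hv, integral_gaussianReal_eq_integral_smul hv]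
  simp only [smul_eq_mul]
  have r1 : ∀ x, gaussianPDFReal b v (a + b - x) = gaussianPDFReal a v x := by
    intro x; simp only [gaussianPDFReal]; congr 3; ring
  have r2 : ∀ x, gaussianPDFReal a v (a + b - x) = gaussianPDFReal b v x := by
    intro x; simp only [gaussianPDFReal]; congr 3; ring
  have i1 := (key a)
  have i2 := (key b)
  have i3 := (key a).comp_sub_left (a + b)
  have i4 := (key b).comp_sub_left (a + b)
  have e3 := integral_sub_left_eq_self (fun x => gaussianPDFReal a v x * |x| ^ β) volume (a + b)
  have e4 := integral_sub_left_eq_self (fun x => gaussianPDFReal b v x * |x| ^ β) volume (a + b)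
  have pos : 0 ≤ ∫ x, ((gaussianPDFReal b v x * |x| ^ β - gaussianPDFReal a v x * |x| ^ β)
      + (gaussianPDFReal b v (a + b - x) * |a + b - x| ^ β
        - gaussianPDFReal a v (a + b - x) * |a + b - x| ^ β)) := by
    refine integral_nonneg fun x => ?_
    simp only [Pi.zero_apply, r1, r2]
    have hfac : gaussianPDFReal b v x * |x| ^ β - gaussianPDFReal a v x * |x| ^ β +
      (gaussianPDFReal a v x * |a + b - x| ^ β - gaussianPDFReal b v x * |a + b - x| ^ β)
      = (gaussianPDFReal b v x - gaussianPDFReal a v x) * (|x| ^ β - |a + b - x| ^ β) := by ring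
    rw [hfac]
    have hvp : (0 : ℝ) < v := by positivity
    have pdfle : ∀ p q : ℝ, (x - q) ^ 2 ≤ (x - p) ^ 2 →
        gaussianPDFReal p v x ≤ gaussianPDFReal q v x := by
      intro p q h
      simp only [gaussianPDFReal]
      gcongr
    rcases le_total (a + b) (2 * x) with h | h
    · refine mul_nonneg (sub_nonneg.2 (pdfle _ _ ?_)) (sub_nonneg.2 ?_)
      · nlinarith
      · refine Real.rpow_le_rpow (abs_nonneg _) ?_ hβ.le
        refine sq_le_sq.1 ?_
        nlinarith
    · refine mul_nonneg_of_nonpos_of_nonpos (sub_nonpos.2 (pdfle _ _ ?_)) (sub_nonpos.2 ?_)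
      · nlinarith
      · refine Real.rpow_le_rpow (abs_nonneg _) ?_ hβ.le
        refine sq_le_sq.1 ?_
        nlinarith
  have j1 : Integrable (fun x => gaussianPDFReal b v x * |x| ^ β
      - gaussianPDFReal a v x * |x| ^ β) := i2.sub i1
  have j2 : Integrable (fun x => gaussianPDFReal b v (a + b - x) * |a + b - x| ^ β
      - gaussianPDFReal a v (a + b - x) * |a + b - x| ^ β) := i4.sub i3
  rw [integral_add j1 j2, integral_sub i2 i1, integral_sub i4 i3, e3, e4] at pos
  linarith

lemma abs_mean (a : ℝ) (v : ℝ≥0) (β : ℝ) :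
    ∫ x, |x| ^ β ∂(gaussianReal a v) = ∫ x, |x| ^ β ∂(gaussianReal |a| v) := by
  rcases abs_cases a with ⟨h, _⟩ | ⟨h, _⟩
  · rw [h]
  · rw [h, ← gaussianReal_map_neg, integral_map (by fun_prop)
      (ms β).aestronglyMeasurable]
    simp

lemma mono_mean {a b : ℝ} (hab : |a| ≤ |b|) (v : ℝ≥0) {β : ℝ} (hβ : 0 < β) :
    ∫ x, |x| ^ β ∂(gaussianReal a v) ≤ ∫ x, |x| ^ β ∂(gaussianReal b v) := by
  rw [abs_mean a, abs_mean b]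
  exact mono_aux (abs_nonneg _) hab v hβ

lemma shift_eq (c : ℝ) (v : ℝ≥0) (β : ℝ) :
    ∫ w, |c + w| ^ β ∂(gaussianReal 0 v) = ∫ x, |x| ^ β ∂(gaussianReal c v) := by
  have := gaussianReal_map_const_add (μ := 0) (v := v) c
  rw [zero_add] at this
  rw [← this, integral_map (by fun_prop) (ms β).aestronglyMeasurable]

lemma cheb {P : Measure ℝ} [IsProbabilityMeasure P] {f g : ℝ → ℝ} (hf : Integrable f P)
    (hg : Integrable g P) (hfg : Integrable (fun x => f x * g x) P)
    (h : ∀ x y, 0 ≤ (f x - f y) * (g x - g y)) :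
    (∫ x, f x ∂P) * (∫ x, g x ∂P) ≤ ∫ x, f x * g x ∂P := by
  have pos : 0 ≤ ∫ z, ((f z.1 * g z.1 + f z.2 * g z.2) - (f z.1 * g z.2 + g z.1 * f z.2))
      ∂(P.prod P) := by
    refine integral_nonneg fun z => ?_
    have := h z.1 z.2
    simp only [Pi.zero_apply]
    linarith
  have j1 : Integrable (fun z : ℝ × ℝ => f z.1 * g z.1 + f z.2 * g z.2) (P.prod P) :=
    (hfg.comp_fst P).add (hfg.comp_snd P)
  have j2 : Integrable (fun z : ℝ × ℝ => f z.1 * g z.2 + g z.1 * f z.2) (P.prod P) :=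
    (hf.mul_prod hg).add (hg.mul_prod hf)
  rw [integral_sub j1 j2,
    integral_add (hfg.comp_fst P) (hfg.comp_snd P), integral_add (hf.mul_prod hg) (hg.mul_prod hf),
    integral_prod_mul, integral_prod_mul, integral_fun_fst (fun x => f x * g x),
    integral_fun_snd (fun x => f x * g x)] at pos
  simp at pos
  linarith

lemma scale (v : ℝ≥0) (β : ℝ) :
    ∫ x, |x| ^ β ∂(gaussianReal 0 v) = (v : ℝ) ^ (β / 2) * ∫ x, |x| ^ β ∂(gaussianReal 0 1) := by
  have := gaussianReal_map_const_mul (μ := 0) (v := 1) (Real.sqrt v)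
  have e : gaussianReal 0 v = (gaussianReal 0 1).map (fun x => Real.sqrt v * x) := by
    rw [this]; congr 1
    · simp
    · ext; simp
  rw [e, integral_map (by fun_prop) (ms β).aestronglyMeasurable, ← integral_const_mul]
  congr 1; ext x
  rw [abs_mul, Real.mul_rpow (abs_nonneg _) (abs_nonneg _), abs_of_nonneg (Real.sqrt_nonneg _),
    Real.sqrt_eq_rpow, ← Real.rpow_mul (by positivity)]
  congr 2; ring

lemma gpi2 {Ω : Type*} [MeasurableSpace Ω] {P : Measure Ω} {Y Z : Ω → ℝ}
    (h : HasGaussianLaw (fun ω => (Y ω, Z ω)) P) (hY0 : ∫ ω, Y ω ∂P = 0) (hZ0 : ∫ ω, Z ω ∂P = 0)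
    {β γ : ℝ} (hβ : 0 < β) (hγ : 0 < γ) :
    (∫ ω, |Y ω| ^ β ∂P) * (∫ ω, |Z ω| ^ γ ∂P) ≤ ∫ ω, |Y ω| ^ β * |Z ω| ^ γ ∂P := by
  have hP := h.isProbabilityMeasure
  have hY := h.fst
  have hZ := h.snd
  by_cases hv : Var[Y; P] = 0
  · have := hY.map_eq_gaussianReal
    have hz : ∫ ω, |Y ω| ^ β ∂P = 0 := by
      have e : ∫ ω, |Y ω| ^ β ∂P = ∫ x, |x| ^ β ∂(P.map Y) := by
        rw [integral_map hY.aemeasurable (ms β).aestronglyMeasurable]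
      rw [e, this, hv, hY0]
      simp [hβ.ne']
    rw [hz, zero_mul]
    exact integral_nonneg fun ω => by positivity
  set k := cov[Y, Z; P] / Var[Y; P] with hk
  set W : Ω → ℝ := fun ω => Z ω - k * Y ω with hW
  have hYW : HasGaussianLaw (fun ω => (Y ω, W ω)) P := by
    have := h.map_fun ((ContinuousLinearMap.fst ℝ ℝ ℝ).prod
      (ContinuousLinearMap.snd ℝ ℝ ℝ - k • ContinuousLinearMap.fst ℝ ℝ ℝ))
    simpa using this
  have hcov : cov[Y, W; P] = 0 := by
    rw [hW, covariance_fun_sub_right hY.memLp_two hZ.memLp_two (hY.memLp_two.const_mul _),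
      covariance_const_mul_right, covariance_self hY.aemeasurable, hk]
    field_simp
    simp
  have hind := hYW.indepFun_of_covariance_eq_zero hcov
  have hmap := (indepFun_iff_map_prod_eq_prod_map_map hY.aemeasurable hYW.snd.aemeasurable).1 hind
  have hW0 : ∫ ω, W ω ∂P = 0 := by
    rw [hW, integral_sub hZ.integrable (hY.integrable.const_mul _), integral_const_mul, hY0, hZ0]
    simp
  set s := Var[W; P].toNNReal
  set v := Var[Y; P].toNNReal
  have lY : P.map Y = gaussianReal 0 v := by rw [hY.map_eq_gaussianReal, hY0]
  have lW : P.map W = gaussianReal 0 s := by rw [hYW.snd.map_eq_gaussianReal, hW0]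
  rw [lY, lW] at hmap
  set Q := (gaussianReal 0 v).prod (gaussianReal 0 s)
  have tr : ∀ F : ℝ × ℝ → ℝ, Measurable F → ∫ ω, F (Y ω, W ω) ∂P = ∫ z, F z ∂Q := by
    intro F hF
    rw [← hmap, integral_map hYW.aemeasurable hF.aestronglyMeasurable]
  have tri : ∀ F : ℝ × ℝ → ℝ, Measurable F → Integrable (fun ω => F (Y ω, W ω)) P →
      Integrable F Q := by
    intro F hF hi
    rw [← hmap, integrable_map_measure hF.aestronglyMeasurable hYW.aemeasurable]
    exact hi
  have zw : ∀ ω, Z ω = k * Y ω + W ω := fun ω => by simp [hW]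
  set g : ℝ → ℝ := fun x => ∫ w, |k * x + w| ^ γ ∂(gaussianReal 0 s) with hg
  have I1 := tri (fun z => |z.1| ^ β * |k * z.1 + z.2| ^ γ) (by fun_prop) (by
    simpa [← zw] using hgl_int2 hY hZ hβ hγ)
  have I2 := tri (fun z => |k * z.1 + z.2| ^ γ) (by fun_prop) (by
    simpa [← zw] using hgl_int hZ hγ)
  have E1 : ∫ ω, |Y ω| ^ β * |Z ω| ^ γ ∂P = ∫ x, |x| ^ β * g x ∂(gaussianReal 0 v) := by
    have := tr (fun z => |z.1| ^ β * |k * z.1 + z.2| ^ γ) (by fun_prop)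
    simp only [← zw] at this
    rw [this, integral_prod _ I1]
    simp only [integral_const_mul, hg]
  have E2 : ∫ ω, |Z ω| ^ γ ∂P = ∫ x, g x ∂(gaussianReal 0 v) := by
    have := tr (fun z => |k * z.1 + z.2| ^ γ) (by fun_prop)
    simp only [← zw] at this
    rw [this, integral_prod _ I2]
  have E3 : ∫ ω, |Y ω| ^ β ∂P = ∫ x, |x| ^ β ∂(gaussianReal 0 v) := by
    rw [← lY, integral_map hY.aemeasurable (ms β).aestronglyMeasurable]
  rw [E1, E2, E3]
  have gm : ∀ x y, |x| ≤ |y| → g x ≤ g y := by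
    intro x y hxy
    simp only [hg, shift_eq]
    refine mono_mean ?_ _ hγ
    rw [abs_mul, abs_mul]
    gcongr
  refine cheb (gint _ _ hβ) I2.integral_prod_left ?_ ?_
  · have := I1.integral_prod_left
    simpa only [integral_const_mul] using this
  · intro x y
    rcases le_total |x| |y| with hxy | hxy
    · exact mul_nonneg_of_nonpos_of_nonpos
        (sub_nonpos.2 (Real.rpow_le_rpow (abs_nonneg _) hxy hβ.le)) (sub_nonpos.2 (gm _ _ hxy))
    · exact mul_nonneg
        (sub_nonneg.2 (Real.rpow_le_rpow (abs_nonneg _) hxy hβ.le)) (sub_nonneg.2 (gm _ _ hxy))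

end GPI

namespace GPI

lemma tilt {v : ℝ≥0} (hv : v ≠ 0) {t : ℝ} (ht : 0 ≤ t) (f : ℝ → ℝ) :
    ∫ x, Real.exp (-(x ^ 2 * t)) * f x ∂(gaussianReal 0 v) =
      (√(1 + 2 * t * v))⁻¹ *
        ∫ x, f x ∂(gaussianReal 0 (v / (1 + 2 * t.toNNReal * v))) := by
  have hv' : v / (1 + 2 * t.toNNReal * v) ≠ 0 := by positivity
  rw [integral_gaussianReal_eq_integral_smul hv, integral_gaussianReal_eq_integral_smul hv',
    ← integral_const_mul]
  congr 1; ext x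
  have hvp : (0 : ℝ) < v := by positivity
  have hw : (0 : ℝ) < 1 + 2 * t * v := by positivity
  simp only [gaussianPDFReal, smul_eq_mul]
  push_cast
  rw [Real.coe_toNNReal t ht]
  have e1 : (√(2 * Real.pi * (v / (1 + 2 * t * v))))⁻¹ =
      (√(2 * Real.pi * v))⁻¹ * √(1 + 2 * t * v) := by
    rw [← mul_div_assoc, Real.sqrt_div (by positivity), inv_div, div_eq_mul_inv, mul_comm]
  have e2 : Real.exp (-(x - 0) ^ 2 / (2 * (v / (1 + 2 * t * v)))) =
      Real.exp (-(x - 0) ^ 2 / (2 * v)) * Real.exp (-(x ^ 2 * t)) := by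
    rw [← Real.exp_add]; congr 1; field_simp; ring
  rw [e1, e2]
  have : √(1 + 2 * t * v) ≠ 0 := by positivity
  field_simp

lemma neg_int {v : ℝ≥0} (hv : v ≠ 0) {s : ℝ} (hs : s < 1) :
    Integrable (fun x => |x| ^ (-s)) (gaussianReal 0 v) := by
  rw [gaussianReal_of_var_ne_zero _ hv,
    integrable_withDensity_iff_integrable_smul' (measurable_gaussianPDF _ _)
      (ae_of_all _ fun _ ↦ gaussianPDF_lt_top)]
  simp only [toReal_gaussianPDF, gaussianPDFReal, smul_eq_mul, mul_assoc, sub_zero]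
  refine Integrable.const_mul ?_ _
  have hvp : (0 : ℝ) < v := by positivity
  have h0 : IntegrableOn (fun x : ℝ => Real.exp (-x ^ 2 / (2 * v)) * |x| ^ (-s)) (Set.Ioi 0) := by
    refine (integrableOn_rpow_mul_exp_neg_mul_sq (b := 1 / (2 * v)) (by positivity)
      (s := -s) (by linarith)).congr_fun (fun x hx => ?_) measurableSet_Ioi
    simp only
    rw [abs_of_pos hx, mul_comm]; congr 2; ring
  rw [← integrableOn_univ, ← Set.Iic_union_Ioi (a := (0 : ℝ)), integrableOn_union]
  refine ⟨?_, h0⟩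
  rw [integrableOn_Iic_iff_integrableOn_Iio]
  rw [← (Measure.measurePreserving_neg (volume : Measure ℝ)).integrableOn_comp_preimage
    (Homeomorph.neg ℝ).measurableEmbedding]
  simpa [Function.comp_def] using h0

lemma gamma_lint {a : ℝ} (ha : 0 < a) {x : ℝ} (hx : x ≠ 0) :
    ∫⁻ t in Set.Ioi (0 : ℝ), ENNReal.ofReal (t ^ (a / 2 - 1) * Real.exp (-(x ^ 2 * t))) =
      ENNReal.ofReal (Real.Gamma (a / 2)) * ENNReal.ofReal (|x| ^ (-a)) := by
  have hx2 : 0 < x ^ 2 := by positivity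
  have h := Real.integral_rpow_mul_exp_neg_mul_Ioi (a := a / 2) (r := x ^ 2) (by positivity) hx2
  have hG := Real.Gamma_pos_of_pos (half_pos ha)
  have hval : (1 / x ^ 2) ^ (a / 2) = |x| ^ (-a) := by
    rw [← sq_abs, one_div, Real.inv_rpow (by positivity), ← Real.rpow_natCast, ← Real.rpow_mul
      (abs_nonneg _), ← Real.rpow_neg (abs_nonneg _)]
    congr 1; push_cast; ring
  rw [← ENNReal.ofReal_mul hG.le, ← ofReal_integral_eq_lintegral_ofReal, h, hval, mul_comm]
  · refine Integrable.of_integral_ne_zero ?_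
    rw [h]; positivity
  · filter_upwards [ae_restrict_mem measurableSet_Ioi] with t ht
    have : (0 : ℝ) < t := ht
    simp only [Pi.zero_apply]
    positivity

lemma mix {Ω : Type*} [MeasurableSpace Ω] {P : Measure Ω} [SFinite P] {X H : Ω → ℝ}
    (hX : Measurable X) (hH : Measurable H) (hH0 : ∀ ω, 0 ≤ H ω) (hne : ∀ᵐ ω ∂P, X ω ≠ 0)
    {a : ℝ} (ha : 0 < a) :
    ENNReal.ofReal (Real.Gamma (a / 2)) * ∫⁻ ω, ENNReal.ofReal (|X ω| ^ (-a) * H ω) ∂P =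
      ∫⁻ t in Set.Ioi (0 : ℝ), ENNReal.ofReal (t ^ (a / 2 - 1)) *
        ∫⁻ ω, ENNReal.ofReal (Real.exp (-(X ω ^ 2 * t)) * H ω) ∂P := by
  rw [← lintegral_const_mul _ (by fun_prop)]
  have e1 : ∀ᵐ ω ∂P, ENNReal.ofReal (Real.Gamma (a / 2)) * ENNReal.ofReal (|X ω| ^ (-a) * H ω)
      = ∫⁻ t in Set.Ioi (0 : ℝ), ENNReal.ofReal (t ^ (a / 2 - 1) * Real.exp (-(X ω ^ 2 * t))) *
        ENNReal.ofReal (H ω) := by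
    filter_upwards [hne] with ω hω
    rw [lintegral_mul_const _ (by fun_prop), gamma_lint ha hω, ENNReal.ofReal_mul (by positivity),
      mul_assoc]
  rw [lintegral_congr_ae e1, lintegral_lintegral_swap (by fun_prop)]
  refine setLIntegral_congr_fun measurableSet_Ioi fun t ht => ?_
  have : (0 : ℝ) < t := ht
  rw [← lintegral_const_mul _ (by fun_prop)]
  refine lintegral_congr fun ω => ?_
  rw [ENNReal.ofReal_mul (by positivity), ENNReal.ofReal_mul (by positivity), mul_assoc]

end GPI

namespace GPI

lemma law0 {Ω : Type*} [MeasurableSpace Ω] {P : Measure Ω} {Y : Ω → ℝ}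
    (h : HasGaussianLaw Y P) (h0 : ∫ ω, Y ω ∂P = 0) (F : ℝ → ℝ) (hF : Measurable F) :
    ∫ ω, F (Y ω) ∂P = ∫ x, F x ∂(gaussianReal 0 Var[Y; P].toNNReal) := by
  have := h.map_eq_gaussianReal
  rw [h0] at this
  rw [← this, integral_map h.aemeasurable hF.aestronglyMeasurable]

lemma wmom {Ω : Type*} [MeasurableSpace Ω] {P : Measure Ω} {X Y : Ω → ℝ}
    (h : HasGaussianLaw (fun ω => (X ω, Y ω)) P)
    (hX0 : ∫ ω, X ω ∂P = 0) (hY0 : ∫ ω, Y ω ∂P = 0)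
    (hvX : 0 < Var[X; P]) (hvY : 0 < Var[Y; P]) {β : ℝ} (hβ : 0 < β) :
    (1 - (cov[X, Y; P] / (√Var[X; P] * √Var[Y; P])) ^ 2) ^ (β / 2) * ∫ ω, |Y ω| ^ β ∂P =
      ∫ ω, |Y ω - cov[X, Y; P] / Var[X; P] * X ω| ^ β ∂P := by
  have hP := h.isProbabilityMeasure
  set c := cov[X, Y; P] with hc
  set W : Ω → ℝ := fun ω => Y ω - c / Var[X; P] * X ω with hW
  have hWg : HasGaussianLaw W P := by
    have := h.map_fun
      (ContinuousLinearMap.snd ℝ ℝ ℝ - (c / Var[X; P]) • ContinuousLinearMap.fst ℝ ℝ ℝ)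
    simpa using this
  have hW0 : ∫ ω, W ω ∂P = 0 := by
    rw [hW, integral_sub h.snd.integrable (h.fst.integrable.const_mul _), integral_const_mul,
      hX0, hY0]
    simp
  have hVW : Var[W; P] = (1 - (c / (√Var[X; P] * √Var[Y; P])) ^ 2) * Var[Y; P] := by
    rw [hW, variance_fun_sub h.snd.memLp_two (h.fst.memLp_two.const_mul _),
      covariance_const_mul_right, variance_const_mul, covariance_comm, ← hc, div_pow c (_ * _), mul_pow,
      Real.sq_sqrt hvX.le, Real.sq_sqrt hvY.le]
    field_simp
    ring
  have hnn : 0 ≤ 1 - (c / (√Var[X; P] * √Var[Y; P])) ^ 2 := by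
    have := variance_nonneg W P
    rw [hVW] at this
    exact nonneg_of_mul_nonneg_left this hvY
  have e1 := law0 h.snd hY0 (fun x => |x| ^ β) (ms β)
  have e2 := law0 hWg hW0 (fun x => |x| ^ β) (ms β)
  rw [e1, e2, scale, scale Var[W; P].toNNReal, Real.coe_toNNReal _ hvY.le,
    Real.coe_toNNReal _ (variance_nonneg _ _), hVW, Real.mul_rpow hnn hvY.le]
  ring

lemma cross {ρ : Measure (ℝ × ℝ)} [IsGaussian ρ] (h1 : ∫ w, w.1 ∂ρ = 0) (h2 : ∫ w, w.2 ∂ρ = 0)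
    (v : ℝ≥0) (k l : ℝ) {β γ : ℝ} (hβ : 0 < β) (hγ : 0 < γ) :
    Integrable (fun z : ℝ × ℝ × ℝ => |k * z.1 + z.2.1| ^ β * |l * z.1 + z.2.2| ^ γ)
      ((gaussianReal 0 v).prod ρ) ∧
    (∫ w, |w.1| ^ β ∂ρ) * (∫ w, |w.2| ^ γ ∂ρ) ≤
      ∫ z, |k * z.1 + z.2.1| ^ β * |l * z.1 + z.2.2| ^ γ ∂((gaussianReal 0 v).prod ρ) := by
  set Q := (gaussianReal 0 v).prod ρ
  have hid : HasGaussianLaw (id : ℝ × ℝ × ℝ → ℝ × ℝ × ℝ) Q := IsGaussian.hasGaussianLaw_id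
  have hRid : HasGaussianLaw (fun w : ℝ × ℝ => (w.1, w.2)) ρ := IsGaussian.hasGaussianLaw_id
  have hg : HasGaussianLaw (fun z : ℝ × ℝ × ℝ => (k * z.1 + z.2.1, l * z.1 + z.2.2)) Q := by
    have := hid.map_fun
      ((k • ContinuousLinearMap.fst ℝ ℝ (ℝ × ℝ) +
        (ContinuousLinearMap.fst ℝ ℝ ℝ).comp (ContinuousLinearMap.snd ℝ ℝ (ℝ × ℝ))).prod
        (l • ContinuousLinearMap.fst ℝ ℝ (ℝ × ℝ) +
        (ContinuousLinearMap.snd ℝ ℝ ℝ).comp (ContinuousLinearMap.snd ℝ ℝ (ℝ × ℝ))))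
    simpa using this
  have i0 : Integrable (fun z : ℝ × ℝ × ℝ => z.1) Q :=
    (IsGaussian.integrable_id (μ := gaussianReal 0 v)).comp_fst ρ
  have i1 : Integrable (fun z : ℝ × ℝ × ℝ => z.2.1) Q := hRid.fst.integrable.comp_snd _
  have i2 : Integrable (fun z : ℝ × ℝ × ℝ => z.2.2) Q := hRid.snd.integrable.comp_snd _
  have m0 : ∫ z : ℝ × ℝ × ℝ, z.1 ∂Q = 0 := by
    rw [integral_fun_fst (fun x : ℝ => x)]; simp
  have m1 : ∫ z : ℝ × ℝ × ℝ, z.2.1 ∂Q = 0 := by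
    rw [integral_fun_snd (fun x : ℝ × ℝ => x.1)]; simp [h1]
  have m2 : ∫ z : ℝ × ℝ × ℝ, z.2.2 ∂Q = 0 := by
    rw [integral_fun_snd (fun x : ℝ × ℝ => x.2)]; simp [h2]
  refine ⟨hgl_int2 hg.fst hg.snd hβ hγ, le_trans ?_ (gpi2 hg ?_ ?_ hβ hγ)⟩
  · refine mul_le_mul ?_ ?_ (integral_nonneg fun _ => by positivity)
      (integral_nonneg fun _ => by positivity)
    · rw [integral_prod _ (hgl_int hg.fst hβ)]
      have hc : ∫ w : ℝ × ℝ, |w.1| ^ β ∂ρ =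
          ∫ _x : ℝ, (∫ w : ℝ × ℝ, |w.1| ^ β ∂ρ) ∂(gaussianReal 0 v) := by simp
      rw [hc]
      refine integral_mono (integrable_const _) (hgl_int hg.fst hβ).integral_prod_left fun x => ?_
      have e1 := law0 hRid.fst h1 (fun x => |x| ^ β) (ms β)
      have e2 := law0 hRid.fst h1 (fun y => |k * x + y| ^ β) (by fun_prop)
      rw [e1, e2, shift_eq]
      exact mono_mean (by rw [abs_zero]; exact abs_nonneg _) _ hβ
    · rw [integral_prod _ (hgl_int hg.snd hγ)]
      have hc : ∫ w : ℝ × ℝ, |w.2| ^ γ ∂ρ =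
          ∫ _x : ℝ, (∫ w : ℝ × ℝ, |w.2| ^ γ ∂ρ) ∂(gaussianReal 0 v) := by simp
      rw [hc]
      refine integral_mono (integrable_const _) (hgl_int hg.snd hγ).integral_prod_left fun x => ?_
      have e1 := law0 hRid.snd h2 (fun x => |x| ^ γ) (ms γ)
      have e2 := law0 hRid.snd h2 (fun y => |l * x + y| ^ γ) (by fun_prop)
      rw [e1, e2, shift_eq]
      exact mono_mean (by rw [abs_zero]; exact abs_nonneg _) _ hγ
  · rw [integral_add (i0.const_mul _) i1, integral_const_mul, m0, m1]; simp
  · rw [integral_add (i0.const_mul _) i2, integral_const_mul, m0, m2]; simp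

lemma key_t {Ω : Type*} [MeasurableSpace Ω] {P : Measure Ω} {X Y Z : Ω → ℝ}
    (h : HasGaussianLaw (fun ω => (X ω, (Y ω, Z ω))) P)
    (hX0 : ∫ ω, X ω ∂P = 0) (hY0 : ∫ ω, Y ω ∂P = 0) (hZ0 : ∫ ω, Z ω ∂P = 0)
    (hv : 0 < Var[X; P])
    {β γ : ℝ} (hβ : 0 < β) (hγ : 0 < γ) {t : ℝ} (ht : 0 ≤ t) :
    (∫ ω, Real.exp (-(X ω ^ 2 * t)) ∂P) *
      ((∫ ω, |Y ω - cov[X, Y; P] / Var[X; P] * X ω| ^ β ∂P) *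
       (∫ ω, |Z ω - cov[X, Z; P] / Var[X; P] * X ω| ^ γ ∂P)) ≤
      ∫ ω, Real.exp (-(X ω ^ 2 * t)) * (|Y ω| ^ β * |Z ω| ^ γ) ∂P := by
  have hP := h.isProbabilityMeasure
  set k := cov[X, Y; P] / Var[X; P] with hk
  set l := cov[X, Z; P] / Var[X; P] with hl
  have hX := h.fst
  have hY := h.snd.fst
  have hZ := h.snd.snd
  have hg : HasGaussianLaw (fun ω => (X ω, (Y ω - k * X ω, Z ω - l * X ω))) P := by
    have := h.map_fun
      ((ContinuousLinearMap.fst ℝ ℝ (ℝ × ℝ)).prod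
       (((ContinuousLinearMap.fst ℝ ℝ ℝ).comp (ContinuousLinearMap.snd ℝ ℝ (ℝ × ℝ))
          - k • ContinuousLinearMap.fst ℝ ℝ (ℝ × ℝ)).prod
        ((ContinuousLinearMap.snd ℝ ℝ ℝ).comp (ContinuousLinearMap.snd ℝ ℝ (ℝ × ℝ))
          - l • ContinuousLinearMap.fst ℝ ℝ (ℝ × ℝ))))
    simpa using this
  have c1 : cov[X, fun ω => Y ω - k * X ω; P] = 0 := by
    rw [covariance_fun_sub_right hX.memLp_two hY.memLp_two (hX.memLp_two.const_mul _),
      covariance_const_mul_right, covariance_self hX.aemeasurable, hk]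
    field_simp
    simp
  have c2 : cov[X, fun ω => Z ω - l * X ω; P] = 0 := by
    rw [covariance_fun_sub_right hX.memLp_two hZ.memLp_two (hX.memLp_two.const_mul _),
      covariance_const_mul_right, covariance_self hX.aemeasurable, hl]
    field_simp
    simp
  have hind : IndepFun X (fun ω => (Y ω - k * X ω, Z ω - l * X ω)) P := by
    refine hg.indepFun_of_covariance_strongDual fun L₁ L₂ => ?_
    have e1 : L₁ ∘ X = fun ω => L₁ 1 * X ω := by
      ext ω
      have := L₁.map_smul (X ω) 1
      simp only [smul_eq_mul, mul_one] at this
      simp [this, mul_comm]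
    have e2 : (L₂ ∘ fun ω => (Y ω - k * X ω, Z ω - l * X ω)) =
        (fun ω => L₂ (1, 0) * (Y ω - k * X ω)) + fun ω => L₂ (0, 1) * (Z ω - l * X ω) := by
      ext ω
      have : ((Y ω - k * X ω, Z ω - l * X ω) : ℝ × ℝ) =
        (Y ω - k * X ω) • ((1, 0) : ℝ × ℝ) + (Z ω - l * X ω) • ((0, 1) : ℝ × ℝ) := by simp
      simp only [Function.comp_apply, Pi.add_apply]
      rw [this, map_add, map_smul, map_smul]
      simp [mul_comm]
    rw [e1, e2, covariance_const_mul_left, covariance_add_right hX.memLp_two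
      (hg.snd.fst.memLp_two.const_mul _) (hg.snd.snd.memLp_two.const_mul _),
      covariance_const_mul_right, covariance_const_mul_right, c1, c2]
    simp
  have hmap := (indepFun_iff_map_prod_eq_prod_map_map hX.aemeasurable hg.snd.aemeasurable).1 hind
  set ρ := P.map (fun ω => (Y ω - k * X ω, Z ω - l * X ω)) with hR
  have hRG : IsGaussian ρ := hg.snd.isGaussian_map
  have hW1 : ∫ ω, (Y ω - k * X ω) ∂P = 0 := by
    rw [integral_sub hY.integrable (hX.integrable.const_mul _), integral_const_mul, hX0, hY0]
    simp
  have hW2 : ∫ ω, (Z ω - l * X ω) ∂P = 0 := by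
    rw [integral_sub hZ.integrable (hX.integrable.const_mul _), integral_const_mul, hX0, hZ0]
    simp
  have trR : ∀ F : ℝ × ℝ → ℝ, Measurable F →
      ∫ ω, F (Y ω - k * X ω, Z ω - l * X ω) ∂P = ∫ w, F w ∂ρ := by
    intro F hF
    rw [hR, integral_map hg.snd.aemeasurable hF.aestronglyMeasurable]
  have r1 := trR (fun w => w.1) (by fun_prop)
  have r2 := trR (fun w => w.2) (by fun_prop)
  have r3 := trR (fun w => |w.1| ^ β) (by fun_prop)
  have r4 := trR (fun w => |w.2| ^ γ) (by fun_prop)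
  simp only at r1 r2 r3 r4
  rw [hW1] at r1
  rw [hW2] at r2
  rw [r3, r4]
  have lX : P.map X = gaussianReal 0 Var[X; P].toNNReal := by rw [hX.map_eq_gaussianReal, hX0]
  set v := Var[X; P].toNNReal with hvdef
  have hv0 : v ≠ 0 := by simpa [hvdef] using hv
  rw [lX] at hmap
  have hl0 := law0 hX hX0 (fun x => Real.exp (-(x ^ 2 * t))) (by fun_prop)
  have ht1 := tilt hv0 ht (fun _ => 1)
  simp only [mul_one, integral_const, probReal_univ, smul_eq_mul] at ht1
  rw [hl0, ht1]
  set G : ℝ × ℝ × ℝ → ℝ := fun z => |k * z.1 + z.2.1| ^ β * |l * z.1 + z.2.2| ^ γ with hG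
  have mG : Measurable G := by fun_prop
  have hc := cross r1.symm r2.symm v k l hβ hγ
  have hc' := cross r1.symm r2.symm (v / (1 + 2 * t.toNNReal * v)) k l hβ hγ
  have E1 : ∫ ω, Real.exp (-(X ω ^ 2 * t)) * (|Y ω| ^ β * |Z ω| ^ γ) ∂P =
      ∫ z, Real.exp (-(z.1 ^ 2 * t)) * G z ∂((gaussianReal 0 v).prod ρ) := by
    rw [← hmap, integral_map hg.aemeasurable (by fun_prop)]
    simp [hG]
  have IG : Integrable (fun z => Real.exp (-(z.1 ^ 2 * t)) * G z) ((gaussianReal 0 v).prod ρ) := by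
    refine hc.1.mono' (by fun_prop) (ae_of_all _ fun z => ?_)
    have hGn : 0 ≤ G z := by simp only [hG]; positivity
    rw [Real.norm_of_nonneg (by positivity)]
    have : Real.exp (-(z.1 ^ 2 * t)) ≤ 1 := Real.exp_le_one_iff.2 (by
      have : 0 ≤ z.1 ^ 2 * t := by positivity
      linarith)
    exact mul_le_of_le_one_left hGn this
  rw [E1, integral_prod _ IG]
  simp only [integral_const_mul]
  rw [tilt hv0 ht (fun x => ∫ w, G (x, w) ∂ρ), ← integral_prod _ hc'.1]
  exact mul_le_mul_of_nonneg_left hc'.2 (by positivity)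

lemma int3 {Ω : Type*} [MeasurableSpace Ω] {P : Measure Ω} {X Y Z : Ω → ℝ}
    (hX : HasGaussianLaw X P) (hY : HasGaussianLaw Y P) (hZ : HasGaussianLaw Z P)
    (hX0 : ∫ ω, X ω ∂P = 0) (hv : 0 < Var[X; P])
    {α β γ : ℝ} (hα : 0 < α) (hα1 : α < 1) (hβ : 0 < β) (hγ : 0 < γ) :
    Integrable (fun ω => |X ω| ^ (-α)) P ∧
    Integrable (fun ω => |X ω| ^ (-α) * (|Y ω| ^ β * |Z ω| ^ γ)) P := by
  have hXi : ∀ s : ℝ, s < 1 → Integrable (fun ω => |X ω| ^ (-s)) P := by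
    intro s hs
    have := neg_int (v := Var[X; P].toNNReal) (by simpa using hv) hs
    have lX := hX.map_eq_gaussianReal
    rw [hX0] at lX
    rw [← lX, integrable_map_measure (ms _).aestronglyMeasurable hX.aemeasurable] at this
    exact this
  refine ⟨hXi _ hα1, ?_⟩
  obtain ⟨p, hp1, hp2⟩ := exists_between ((one_lt_inv₀ hα).2 hα1)
  have hp0 : 0 < p := by linarith
  have hpq : p.HolderConjugate (p / (p - 1)) := Real.HolderConjugate.conjExponent hp1
  set q := p / (p - 1)
  have hq0 : 0 < q := hpq.symm.pos
  have i1 := hXi (α * p) (by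
    calc α * p < α * α⁻¹ := by gcongr
      _ = 1 := mul_inv_cancel₀ hα.ne')
  have i2 := hgl_int2 hY hZ (mul_pos hβ hq0) (mul_pos hγ hq0)
  refine ((i1.div_const p).add (i2.div_const q)).mono'
    ((hXi _ hα1).1.mul (hgl_int2 hY hZ hβ hγ).1) (ae_of_all _ fun ω => ?_)
  rw [Real.norm_of_nonneg (by positivity)]
  have := Real.young_inequality_of_nonneg (a := |X ω| ^ (-α)) (b := |Y ω| ^ β * |Z ω| ^ γ)
    (by positivity) (by positivity) hpq
  rw [Real.mul_rpow (by positivity) (by positivity), ← Real.rpow_mul (abs_nonneg _),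
    ← Real.rpow_mul (abs_nonneg _), ← Real.rpow_mul (abs_nonneg _), neg_mul] at this
  exact this

/-- The main inequality for Gaussian triples. -/
lemma main {Ω : Type*} [MeasurableSpace Ω] {P : Measure Ω} {X Y Z : Ω → ℝ}
    (mX : Measurable X) (mY : Measurable Y) (mZ : Measurable Z)
    (h : HasGaussianLaw (fun ω => (X ω, (Y ω, Z ω))) P)
    (hX0 : ∫ ω, X ω ∂P = 0) (hY0 : ∫ ω, Y ω ∂P = 0) (hZ0 : ∫ ω, Z ω ∂P = 0)
    (hv : 0 < Var[X; P]) (hvY : 0 < Var[Y; P]) (hvZ : 0 < Var[Z; P])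
    {α β γ : ℝ} (hα : 0 < α) (hα1 : α < 1) (hβ : 0 < β) (hγ : 0 < γ) :
    (1 - (cov[X, Y; P] / (√Var[X; P] * √Var[Y; P])) ^ 2) ^ (β / 2) *
    (1 - (cov[X, Z; P] / (√Var[X; P] * √Var[Z; P])) ^ 2) ^ (γ / 2) *
    ((∫ ω, |X ω| ^ (-α) ∂P) * (∫ ω, |Y ω| ^ β ∂P) * ∫ ω, |Z ω| ^ γ ∂P) ≤
      ∫ ω, |X ω| ^ (-α) * |Y ω| ^ β * |Z ω| ^ γ ∂P := by
  have hP := h.isProbabilityMeasure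
  have hXY : HasGaussianLaw (fun ω => (X ω, Y ω)) P := by
    have := h.map_fun ((ContinuousLinearMap.fst ℝ ℝ (ℝ × ℝ)).prod
      ((ContinuousLinearMap.fst ℝ ℝ ℝ).comp (ContinuousLinearMap.snd ℝ ℝ (ℝ × ℝ))))
    simpa using this
  have hXZ : HasGaussianLaw (fun ω => (X ω, Z ω)) P := by
    have := h.map_fun ((ContinuousLinearMap.fst ℝ ℝ (ℝ × ℝ)).prod
      ((ContinuousLinearMap.snd ℝ ℝ ℝ).comp (ContinuousLinearMap.snd ℝ ℝ (ℝ × ℝ))))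
    simpa using this
  have w1 := wmom hXY hX0 hY0 hv hvY hβ
  have w2 := wmom hXZ hX0 hZ0 hv hvZ hγ
  set A := (1 - (cov[X, Y; P] / (√Var[X; P] * √Var[Y; P])) ^ 2) ^ (β / 2)
  set B := (1 - (cov[X, Z; P] / (√Var[X; P] * √Var[Z; P])) ^ 2) ^ (γ / 2)
  have kt := fun (t : ℝ) (ht : 0 ≤ t) => key_t h hX0 hY0 hZ0 hv hβ hγ ht
  set M1 := ∫ ω, |Y ω - cov[X, Y; P] / Var[X; P] * X ω| ^ β ∂P with hM1
  set M2 := ∫ ω, |Z ω - cov[X, Z; P] / Var[X; P] * X ω| ^ γ ∂P with hM2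
  have hM10 : 0 ≤ M1 := integral_nonneg fun _ => by positivity
  have hM20 : 0 ≤ M2 := integral_nonneg fun _ => by positivity
  obtain ⟨I1, I2⟩ := int3 hXY.fst hXY.snd hXZ.snd hX0 hv hα hα1 hβ hγ
  have IH := hgl_int2 hXY.snd hXZ.snd hβ hγ
  have e : A * B * ((∫ ω, |X ω| ^ (-α) ∂P) * (∫ ω, |Y ω| ^ β ∂P) * ∫ ω, |Z ω| ^ γ ∂P) =
      ∫ ω, |X ω| ^ (-α) * (M1 * M2) ∂P := by
    rw [integral_mul_const, ← w1, ← w2]; ring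
  rw [e]
  simp only [mul_assoc (|X _| ^ (-α))]
  have hne : ∀ᵐ ω ∂P, X ω ≠ 0 := by
    have hv0 : Var[X; P].toNNReal ≠ 0 := by simpa using hv
    have := nullSingletonClass_gaussianReal (μ := ∫ ω, X ω ∂P) hv0
    rw [← hXY.fst.map_eq_gaussianReal] at this
    have h0 : P.map X {0} = 0 := measure_singleton 0
    rw [Measure.map_apply mX (measurableSet_singleton 0)] at h0
    rw [ae_iff]
    simpa [Set.preimage] using h0
  have l1 := mix (P := P) mX (measurable_const (a := M1 * M2)) (fun _ => by positivity) hne hα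
  have l2 := mix (P := P) mX (H := fun ω => |Y ω| ^ β * |Z ω| ^ γ) (by fun_prop)
    (fun _ => by positivity) hne hα
  have bd : ∀ t : ℝ, 0 ≤ t → ∀ ω, Real.exp (-(X ω ^ 2 * t)) ≤ 1 := fun t ht ω =>
    Real.exp_le_one_iff.2 (by
      have : 0 ≤ X ω ^ 2 * t := by positivity
      linarith)
  have le : ∫⁻ ω, ENNReal.ofReal (|X ω| ^ (-α) * (M1 * M2)) ∂P ≤
      ∫⁻ ω, ENNReal.ofReal (|X ω| ^ (-α) * (|Y ω| ^ β * |Z ω| ^ γ)) ∂P := by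
    have hG := Real.Gamma_pos_of_pos (half_pos hα)
    refine (ENNReal.mul_le_mul_iff_right (a := ENNReal.ofReal (Real.Gamma (α / 2)))
      (by simpa using hG) (by simp)).1 ?_
    rw [l1, l2]
    refine setLIntegral_mono' measurableSet_Ioi fun t ht => ?_
    have ht0 : (0 : ℝ) ≤ t := le_of_lt ht
    gcongr ENNReal.ofReal (t ^ (α / 2 - 1)) * ?_
    have j0 : Integrable (fun ω => Real.exp (-(X ω ^ 2 * t))) P := by
      refine (integrable_const (1 : ℝ)).mono' (by fun_prop) (ae_of_all _ fun ω => ?_)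
      rw [Real.norm_of_nonneg (by positivity)]
      exact bd t ht0 ω
    have j1 : Integrable (fun ω => Real.exp (-(X ω ^ 2 * t)) * (|Y ω| ^ β * |Z ω| ^ γ)) P := by
      refine IH.mono' (by fun_prop) (ae_of_all _ fun ω => ?_)
      rw [Real.norm_of_nonneg (by positivity)]
      exact mul_le_of_le_one_left (by positivity) (bd t ht0 ω)
    rw [← ofReal_integral_eq_lintegral_ofReal (j0.mul_const _)
      (ae_of_all _ fun ω => by simp only [Pi.zero_apply]; positivity),
      ← ofReal_integral_eq_lintegral_ofReal j1
      (ae_of_all _ fun ω => by simp only [Pi.zero_apply]; positivity), integral_mul_const]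
    exact ENNReal.ofReal_le_ofReal (kt t ht0)
  rw [← ofReal_integral_eq_lintegral_ofReal (I1.mul_const _)
      (ae_of_all _ fun ω => by simp only [Pi.zero_apply]; positivity),
      ← ofReal_integral_eq_lintegral_ofReal I2
      (ae_of_all _ fun ω => by simp only [Pi.zero_apply]; positivity)] at le
  exact (ENNReal.ofReal_le_ofReal_iff (integral_nonneg fun ω => by positivity)).1 le

end GPI

namespace GPI

lemma law {Ω : Type*} [MeasurableSpace Ω] (μ : Measure Ω) [IsProbabilityMeasure μ]
    (X : Ω → (Fin 3 → ℝ)) (hXm : Measurable X)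
    (S : Matrix (Fin 3) (Fin 3) ℝ)
    (hGauss : ∀ u : Fin 3 → ℝ,
      ∫ ω, Complex.exp (Complex.I * ((u ⬝ᵥ X ω : ℝ) : ℂ)) ∂μ =
        Complex.exp (-(((u ⬝ᵥ S *ᵥ u : ℝ) : ℂ)) / 2)) (u : Fin 3 → ℝ) :
    0 ≤ u ⬝ᵥ S *ᵥ u ∧
    μ.map (fun ω => u ⬝ᵥ X ω) = gaussianReal 0 (u ⬝ᵥ S *ᵥ u).toNNReal := by
  have hq : 0 ≤ u ⬝ᵥ S *ᵥ u := by
    have h1 : ‖∫ ω, Complex.exp (Complex.I * ((u ⬝ᵥ X ω : ℝ) : ℂ)) ∂μ‖ ≤ 1 := by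
      refine (norm_integral_le_of_norm_le_const (C := 1) (ae_of_all _ fun ω => ?_)).trans (by simp)
      rw [Complex.norm_exp_I_mul_ofReal]
    rw [hGauss, Complex.norm_exp, Real.exp_le_one_iff] at h1
    have : (-((u ⬝ᵥ S *ᵥ u : ℝ) : ℂ) / 2).re = -(u ⬝ᵥ S *ᵥ u) / 2 := by
      rw [show (-((u ⬝ᵥ S *ᵥ u : ℝ) : ℂ) / 2) = ((-(u ⬝ᵥ S *ᵥ u) / 2 : ℝ) : ℂ) by push_cast; ring,
        Complex.ofReal_re]
    rw [this] at h1
    linarith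
  refine ⟨hq, ?_⟩
  have hm : Measurable (fun ω => u ⬝ᵥ X ω) := by
    simp only [dotProduct]; fun_prop
  have := Measure.isProbabilityMeasure_map (μ := μ) hm.aemeasurable
  refine Measure.ext_of_charFun ?_
  ext t
  rw [charFun_gaussianReal, charFun_apply_real, integral_map hm.aemeasurable (by fun_prop)]
  have h := hGauss (t • u)
  rw [Matrix.mulVec_smul, dotProduct_smul, smul_dotProduct] at h
  simp only [smul_dotProduct, smul_eq_mul] at h
  have e1 : ∀ ω, Complex.exp (t * ((u ⬝ᵥ X ω : ℝ) : ℂ) * Complex.I) =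
      Complex.exp (Complex.I * ((t * (u ⬝ᵥ X ω) : ℝ) : ℂ)) := by
    intro ω; congr 1; push_cast; ring
  simp only [e1]
  rw [h]
  congr 1
  rw [Real.coe_toNNReal _ hq]
  push_cast; ring

end GPI

theorem gpi_dim_three_lower_bound
    {Ω : Type*} [MeasurableSpace Ω] (μ : Measure Ω) [IsProbabilityMeasure μ]
    (X : Ω → (Fin 3 → ℝ)) (hXm : Measurable X)
    (S : Matrix (Fin 3) (Fin 3) ℝ) (hS : S.IsSymm)
    (hGauss : ∀ u : Fin 3 → ℝ,
      ∫ ω, Complex.exp (Complex.I * ((u ⬝ᵥ X ω : ℝ) : ℂ)) ∂μ =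
        Complex.exp (-(((u ⬝ᵥ S *ᵥ u : ℝ) : ℂ)) / 2))
    (hvar : ∀ i, 0 < S i i)
    {α₁ α₂ α₃ : ℝ} (hα₁ : α₁ ∈ Set.Ioo (0 : ℝ) 1) (hα₂ : 0 < α₂) (hα₃ : 0 < α₃) :
    (1 - (S 0 1 / (Real.sqrt (S 0 0) * Real.sqrt (S 1 1))) ^ 2) ^ (α₂ / 2) *
        (1 - (S 0 2 / (Real.sqrt (S 0 0) * Real.sqrt (S 2 2))) ^ 2) ^ (α₃ / 2) *
        ((∫ ω, |X ω 0| ^ (-α₁) ∂μ) * (∫ ω, |X ω 1| ^ α₂ ∂μ) *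
          ∫ ω, |X ω 2| ^ α₃ ∂μ) ≤
      ∫ ω, |X ω 0| ^ (-α₁) * |X ω 1| ^ α₂ * |X ω 2| ^ α₃ ∂μ := by
  have hlaw := GPI.law μ X hXm S hGauss
  have hmi : ∀ i, Measurable (fun ω => X ω i) := fun i => by fun_prop
  have hmu : ∀ u : Fin 3 → ℝ, Measurable (fun ω => u ⬝ᵥ X ω) := fun u => by
    simp only [dotProduct]; fun_prop
  have hvarq : ∀ u : Fin 3 → ℝ, Var[fun ω => u ⬝ᵥ X ω; μ] = u ⬝ᵥ S *ᵥ u := by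
    intro u
    have := variance_map (X := id) (μ := μ) (Y := fun ω => u ⬝ᵥ X ω) (by fun_prop)
      (hmu u).aemeasurable
    rw [(hlaw u).2, variance_id_gaussianReal, Real.coe_toNNReal _ (hlaw u).1] at this
    exact this.symm
  have hmean : ∀ u : Fin 3 → ℝ, ∫ ω, u ⬝ᵥ X ω ∂μ = 0 := by
    intro u
    have := integral_map (μ := μ) (hmu u).aemeasurable (f := fun x : ℝ => x) (by fun_prop)
    rw [(hlaw u).2, integral_id_gaussianReal] at this
    exact this.symm
  have hG : IsGaussian (μ.map X) := by
    refine isGaussian_of_map_eq_gaussianReal fun L => ?_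
    let u : Fin 3 → ℝ := fun i => L (Pi.single i 1)
    refine ⟨0, (u ⬝ᵥ S *ᵥ u).toNNReal, ?_⟩
    rw [← (hlaw u).2, Measure.map_map (by fun_prop) hXm]
    congr 1; ext ω
    simp only [Function.comp_apply, dotProduct, u]
    conv_lhs => rw [pi_eq_sum_univ' (X ω)]
    simp [map_sum, mul_comm]
  have hX : HasGaussianLaw X μ := ⟨hG⟩
  have ev : ∀ i, (fun ω => X ω i) = fun ω => (Pi.single i 1 : Fin 3 → ℝ) ⬝ᵥ X ω := by
    intro i; ext ω; simp
  have hm0 : ∀ i, ∫ ω, X ω i ∂μ = 0 := fun i => by rw [ev]; exact hmean _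
  have hV : ∀ i, Var[fun ω => X ω i; μ] = S i i := fun i => by
    rw [ev, hvarq]; simp
  have hL2 : ∀ i, MemLp (fun ω => X ω i) 2 μ := fun i => (HasGaussianLaw.eval (X := fun i ω => X ω i) hX i).memLp_two
  have hC : ∀ i j, cov[fun ω => X ω i, fun ω => X ω j; μ] = S i j := by
    intro i j
    have h1 := variance_fun_add (hL2 i) (hL2 j)
    have h2 := hvarq (Pi.single i 1 + Pi.single j 1)
    have h3 : (fun ω => (Pi.single i 1 + Pi.single j 1 : Fin 3 → ℝ) ⬝ᵥ X ω) =
      fun ω => X ω i + X ω j := by ext ω; simp [add_dotProduct]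
    rw [h3, h1, hV, hV] at h2
    simp [add_dotProduct, Matrix.mulVec_add] at h2
    have := hS.apply i j
    linarith
  have h3 : HasGaussianLaw (fun ω => (X ω 0, (X ω 1, X ω 2))) μ := by
    have := hX.map_fun ((ContinuousLinearMap.proj (R := ℝ) (φ := fun _ : Fin 3 => ℝ) 0).prod
      ((ContinuousLinearMap.proj (R := ℝ) (φ := fun _ : Fin 3 => ℝ) 1).prod
      (ContinuousLinearMap.proj (R := ℝ) (φ := fun _ : Fin 3 => ℝ) 2)))
    simpa using this
  have := GPI.main (hmi 0) (hmi 1) (hmi 2) h3 (hm0 0) (hm0 1) (hm0 2)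
    (by rw [hV]; exact hvar 0) (by rw [hV]; exact hvar 1) (by rw [hV]; exact hvar 2)
    hα₁.1 hα₁.2 hα₂ hα₃
  simpa only [hV, hC] using this
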